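/- For every integer n ≥ 0, the value of the rescaled Atkin polynomial at 1 is 𝓐_{n+1}(1) = (7/12)·((11/12)_n·(19/12)_n)/(2n+1)!, and consequently for every real t with |t| < 1, Σ_{n=0}^{∞} C_{n+1}·𝓐_{n+1}(1)·t^n = (7/12)·F(11/12, 19/12; 3; t), where C_m = (1/(m+1))·binom(2m, m) is the m-th Catalan number. -/

import Mathlib

noncomputable section

/-- Rising factorial (Pochhammer symbol) `(a)_n = a(a+1)⋯(a+n-1)`. -/
def poch (a : ℝ) (n : ℕ) : ℝ := ∏ i ∈ Finset.range n, (a + (i : ℝ))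

/-- The rescaled Atkin polynomials `𝓐_n`. -/
def Atkin : ℕ → ℝ → ℝ
  | 0, _ => 1
  | 1, x => x - 5/12
  | 2, x => x^2 - (205/216) * x + 935/10368
  | n + 3, x =>
      (x - 2 * (((n : ℝ) + 2)^2 - 29/144) / (4 * ((n : ℝ) + 2)^2 - 1)) * Atkin (n + 2) x
      - ((((n : ℝ) + 2) - 13/12) * (((n : ℝ) + 2) - 7/12) * (((n : ℝ) + 2) - 5/12)
          * (((n : ℝ) + 2) + 1/12)
         / (2 * ((n : ℝ) + 2) * (2 * ((n : ℝ) + 2) - 1)^2 * (2 * ((n : ℝ) + 2) - 2)))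
        * Atkin (n + 1) x

/-- The Gauss hypergeometric series `F(a,b;c;x) = Σ_{k≥0} (a)_k (b)_k / ((c)_k k!) xᵏ`. -/
def hyp (a b c x : ℝ) : ℝ :=
  ∑' k : ℕ, poch a k * poch b k / (poch c k * (Nat.factorial k : ℝ)) * x ^ k

/-!
At `x = 1` the recurrence `𝓐_{ν+1} = (1 - α_ν) 𝓐_ν - β_ν 𝓐_{ν-1}` factors: there are rational
functions `r`, `s` with `1 - α_ν = r_ν + s_ν` and `β_ν = r_{ν-1} s_ν`. Hence
`𝓐_{ν+1} - r_ν 𝓐_ν = s_ν (𝓐_ν - r_{ν-1} 𝓐_{ν-1})`. The bracket vanishes at the start, so it always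
vanishes, and `𝓐_{ν+1}(1)` is a product of the ratios `r_ν`, that is, a quotient of rising
factorials. The factor `(2n+1)!` in its denominator combines with the Catalan number `C_{n+1}` to
leave the hypergeometric denominator `(3)_n n!`.
-/

open Filter Topology
open scoped Nat

theorem poch_zero (a : ℝ) : poch a 0 = 1 :=
  Finset.prod_range_zero _

theorem poch_succ (a : ℝ) (n : ℕ) : poch a (n + 1) = poch a n * (a + n) :=
  Finset.prod_range_succ _ n

theorem poch_natCast_add_one (k n : ℕ) : poch (k + 1) n = ((k + n)! : ℝ) / k ! := by
  induction n with
  | zero => simp [poch_zero, Nat.factorial_ne_zero]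
  | succ n ih =>
    rw [poch_succ, ih, ← add_assoc, Nat.factorial_succ]
    push_cast
    ring

/-- The coefficient of `x ^ k` in the Gauss hypergeometric series `F(a, b; c; x)`. It is `0` by
the convention for division by zero when `c` is one of `0, -1, …, 1 - k`. -/
def hypCoeff (a b c : ℝ) (k : ℕ) : ℝ :=
  poch a k * poch b k / (poch c k * (k ! : ℝ))

theorem hypCoeff_succ (a b c : ℝ) (k : ℕ) :
    hypCoeff a b c (k + 1) = hypCoeff a b c k * ((a + k) / (c + k) * ((b + k) / (1 + k))) := by
  simp only [hypCoeff, poch_succ, Nat.factorial_succ, div_eq_mul_inv, mul_inv, Nat.cast_mul,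
    Nat.cast_add, Nat.cast_one]
  ring

theorem tendsto_hypCoeff_ratio (a b c : ℝ) :
    Tendsto (fun k : ℕ ↦ (a + k) / (c + k) * ((b + k) / (1 + k))) atTop (𝓝 1) := by
  have tendsto_div (p q : ℝ) : Tendsto (fun k : ℕ ↦ (p + k) / (q + k)) atTop (𝓝 1) := by
    simpa using tendsto_add_mul_div_add_mul_atTop_nhds p q 1 (one_ne_zero (α := ℝ))
  simpa using (tendsto_div a c).mul (tendsto_div b 1)

theorem summable_hypCoeff_mul_pow (a b c : ℝ) {t : ℝ} (ht : |t| < 1) :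
    Summable fun k ↦ hypCoeff a b c k * t ^ k := by
  obtain ⟨r, htr, hr⟩ := exists_between ht
  have tendsto_ratio :
      Tendsto (fun k : ℕ ↦ |(a + k) / (c + k) * ((b + k) / (1 + k)) * t|) atTop (𝓝 |t|) := by
    simpa using ((tendsto_hypCoeff_ratio a b c).mul_const t).abs
  refine summable_of_ratio_norm_eventually_le hr ?_
  filter_upwards [tendsto_ratio.eventually_le_const htr] with k hk
  calc ‖hypCoeff a b c (k + 1) * t ^ (k + 1)‖
      = |(a + k) / (c + k) * ((b + k) / (1 + k)) * t| * ‖hypCoeff a b c k * t ^ k‖ := by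
        rw [← Real.norm_eq_abs, ← norm_mul, hypCoeff_succ]
        ring_nf
    _ ≤ r * ‖hypCoeff a b c k * t ^ k‖ := by gcongr

theorem hasSum_hyp (a b c : ℝ) {t : ℝ} (ht : |t| < 1) :
    HasSum (fun k ↦ hypCoeff a b c k * t ^ k) (hyp a b c t) :=
  (summable_hypCoeff_mul_pow a b c ht).hasSum

theorem choose_two_mul_self_div_succ {K : Type*} [Field K] [CharZero K] (n : ℕ) :
    ((2 * n).choose n : K) / (n + 1) = ((2 * n)! : K) / (n ! * (n + 1)!) := by
  rw [Nat.cast_choose K (Nat.le_mul_of_pos_left n two_pos), two_mul, Nat.add_sub_cancel,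
    Nat.factorial_succ n, div_div]
  push_cast
  ring

/-- The coefficient `α_ν` in the recurrence
`𝓐_{ν+1}(x) = (x - α_ν) 𝓐_ν(x) - β_ν 𝓐_{ν-1}(x)`, as a function of a real index `ν`. -/
def atkinAlpha (ν : ℝ) : ℝ :=
  2 * (ν ^ 2 - 29 / 144) / (4 * ν ^ 2 - 1)

/-- The coefficient `β_ν` in the recurrence
`𝓐_{ν+1}(x) = (x - α_ν) 𝓐_ν(x) - β_ν 𝓐_{ν-1}(x)`, as a function of a real index `ν`. -/
def atkinBeta (ν : ℝ) : ℝ :=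
  (ν - 13 / 12) * (ν - 7 / 12) * (ν - 5 / 12) * (ν + 1 / 12)
    / (2 * ν * (2 * ν - 1) ^ 2 * (2 * ν - 2))

/-- The ratio `r_ν = 𝓐_{ν+1}(1) / 𝓐_ν(1)`, as a function of a real index `ν`. -/
def atkinRatio (ν : ℝ) : ℝ :=
  (ν - 1 / 12) * (ν + 7 / 12) / (2 * ν * (2 * ν + 1))

/-- The factor `s_ν` complementary to `atkinRatio` in the factorization `1 - α_ν = r_ν + s_ν`,
`β_ν = r_{ν-1} s_ν` of the recurrence at `1`. -/
def atkinCofactor (ν : ℝ) : ℝ :=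
  (ν - 7 / 12) * (ν + 1 / 12) / (2 * ν * (2 * ν - 1))

theorem atkin_add_three (n : ℕ) (x : ℝ) :
    Atkin (n + 3) x =
      (x - atkinAlpha (n + 2)) * Atkin (n + 2) x - atkinBeta (n + 2) * Atkin (n + 1) x := by
  rw [Atkin, atkinAlpha, atkinBeta]

theorem one_sub_atkinAlpha {ν : ℝ} (hν : 1 / 2 < ν) :
    1 - atkinAlpha ν = atkinRatio ν + atkinCofactor ν := by
  have factor : 4 * ν ^ 2 - 1 = (2 * ν - 1) * (2 * ν + 1) := by ring
  have h₀ : ν ≠ 0 := by linarith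
  have h₁ : 2 * ν - 1 ≠ 0 := by linarith
  have h₂ : 2 * ν + 1 ≠ 0 := by linarith
  rw [atkinAlpha, atkinRatio, atkinCofactor, factor]
  field_simp
  ring

theorem atkinBeta_eq_mul (ν : ℝ) : atkinBeta ν = atkinRatio (ν - 1) * atkinCofactor ν := by
  rw [atkinBeta, atkinRatio, atkinCofactor, div_mul_div_comm]
  ring_nf

theorem atkin_add_two_one (n : ℕ) :
    Atkin (n + 2) 1 = atkinRatio (n + 1) * Atkin (n + 1) 1 := by
  induction n with
  | zero => norm_num [Atkin, atkinRatio]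
  | succ n ih =>
    have hα : 1 - atkinAlpha (n + 2) = atkinRatio (n + 2) + atkinCofactor (n + 2) :=
      one_sub_atkinAlpha (by linarith [n.cast_nonneg (α := ℝ)])
    have hβ : atkinBeta (n + 2) = atkinRatio (n + 1) * atkinCofactor (n + 2) := by
      rw [atkinBeta_eq_mul]
      ring_nf
    calc Atkin (n + 3) 1
        = (atkinRatio (n + 2) + atkinCofactor (n + 2)) * Atkin (n + 2) 1
            - atkinRatio (n + 1) * atkinCofactor (n + 2) * Atkin (n + 1) 1 := by
          rw [atkin_add_three, hα, hβ]
      _ = atkinRatio (n + 2) * Atkin (n + 2) 1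
            + atkinCofactor (n + 2)
              * (Atkin (n + 2) 1 - atkinRatio (n + 1) * Atkin (n + 1) 1) := by ring
      _ = atkinRatio (n + 2) * Atkin (n + 2) 1 := by rw [ih, sub_self, mul_zero, add_zero]
      _ = atkinRatio ((n + 1 : ℕ) + 1) * Atkin (n + 2) 1 := by
          push_cast
          ring_nf

theorem atkin_add_one_one (n : ℕ) :
    Atkin (n + 1) 1 =
      7 / 12 * (poch (11 / 12) n * poch (19 / 12) n) / ((2 * n + 1)! : ℝ) := by
  induction n with
  | zero => norm_num [Atkin, poch_zero]
  | succ n ih =>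
    have factorial_eq : ((2 * (n + 1) + 1)! : ℝ) = (2 * n + 3) * (2 * n + 2) * (2 * n + 1)! := by
      rw [show 2 * (n + 1) + 1 = 2 * n + 1 + 1 + 1 by ring, Nat.factorial_succ,
        Nat.factorial_succ]
      push_cast
      ring
    rw [atkin_add_two_one, ih, poch_succ, poch_succ, factorial_eq, atkinRatio]
    field_simp
    ring

theorem catalan_mul_atkin_one (m : ℕ) :
    ((2 * (m + 1)).choose (m + 1) : ℝ) / ((m + 1 : ℕ) + 1 : ℝ) * Atkin (m + 1) 1 =
      7 / 12 * hypCoeff (11 / 12) (19 / 12) 3 m := by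
  have poch_three : poch 3 m = ((m + 2)! : ℝ) / 2 := by
    have h := poch_natCast_add_one 2 m
    norm_num [add_comm 2 m] at h
    exact h
  have factorial_eq : ((2 * (m + 1))! : ℝ) = 2 * (m + 1) * (2 * m + 1)! := by
    rw [show 2 * (m + 1) = 2 * m + 1 + 1 by ring, Nat.factorial_succ]
    push_cast
    ring
  rw [choose_two_mul_self_div_succ, factorial_eq, atkin_add_one_one, hypCoeff, poch_three,
    Nat.factorial_succ m]
  push_cast
  field_simp

theorem hasSum_catalan_mul_atkin_one {t : ℝ} (ht : |t| < 1) :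
    HasSum (fun m : ℕ ↦ ((2 * (m + 1)).choose (m + 1) : ℝ) / ((m + 1 : ℕ) + 1 : ℝ)
        * Atkin (m + 1) 1 * t ^ m)
      (7 / 12 * hyp (11 / 12) (19 / 12) 3 t) := by
  simp only [catalan_mul_atkin_one, mul_assoc]
  exact (hasSum_hyp _ _ _ ht).mul_left _

theorem atkin_at_one (n : ℕ) (t : ℝ) (ht : |t| < 1) :
    Atkin (n + 1) 1 =
      ((7:ℝ)/12) * (poch (11/12) n * poch (19/12) n) / (Nat.factorial (2*n + 1) : ℝ)
    ∧ (∑' m : ℕ, ((Nat.choose (2*(m + 1)) (m + 1) : ℝ) / ((m + 1 : ℕ) + 1 : ℝ))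
        * Atkin (m + 1) 1 * t^m)
      = (7/12) * hyp (11/12) (19/12) 3 t := by
  exact ⟨atkin_add_one_one n, (hasSum_catalan_mul_atkin_one ht).tsum_eq⟩
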